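/- (Karcher equation) Let A₁, …, Aₙ be m×m positive definite complex matrices, let w = (w₁, …, wₙ) be a weight (wᵢ > 0, Σᵢ wᵢ = 1), and let X be positive definite. Then X minimizes the function Y ↦ Σᵢ wᵢ δ²(Y, Aᵢ) over positive definite matrices if and only if Σᵢ wᵢ log(X^{-1/2} Aᵢ X^{-1/2}) = 0. -/

import Mathlib

/-!
Both directions rest on the exponential metric increasing property: for positive definite `P`, `Q`
and invertible `C`, `‖log (C Q C*) - log (C P C*)‖₂ ≤ δ(P, Q)` (`hsInner_mlog_congr_le_rdist`).

This is proved without differentiating the logarithm. Comparing matrix entries in the eigenbases of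
`P` and `Q` and using `|x| ≤ |sinh x|` gives the finite inequality
`‖log Q - log P‖₂² ≤ Re Tr(P⁻¹ Q + Q⁻¹ P) - 2 m` (`hsInner_mlog_sub_le_symDiv`), whose right side is
invariant under congruence. With `K = log(P^{-1/2} Q P^{-1/2})`, cut the geodesic
`s ↦ P^{1/2} exp(s K) P^{1/2}` from `P` to `Q` into `N` equal pieces. On each piece the right side is
`∑ᵢ 4 sinh²(κᵢ / 2 N)`, with `κᵢ` the eigenvalues of `K`; summing the pieces and letting `N → ∞`
yields `∑ᵢ κᵢ² = δ(P, Q)²`.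

Write `Bᵢ = X^{-1/2} Aᵢ X^{-1/2}` and `S = ∑ᵢ wᵢ log Bᵢ`.

If `S = 0`, put `H = log(X^{-1/2} Y X^{-1/2})`. Then
`δ(Y, Aᵢ)² ≥ ‖log Bᵢ - H‖₂² ≥ ‖log Bᵢ‖₂² - 2 ⟨H, log Bᵢ⟩`, and the weighted sum of the cross terms
is `-2 ⟨H, S⟩ = 0`.

If `X` is a minimizer, compare it with `Y = X^{1/2} exp(t S) X^{1/2}` for `t > 0`. The inequality
based at `Y` instead of `X` reads
`δ(X, Aᵢ)² ≥ δ(Y, Aᵢ)² + 2 t ⟨S, log Qᵢ⟩ + t² ‖S‖₂²`, where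
`Qᵢ = exp(-t S / 2) Bᵢ exp(-t S / 2)`. Summing, minimality forces `∑ᵢ wᵢ ⟨S, log Qᵢ⟩ ≤ 0`. Since
`‖log Qᵢ - log Bᵢ‖₂²` is bounded by the trace expression above, which tends to `0` with `t`, it
follows that `‖S‖₂² ≤ 0`.
-/

open Matrix
open scoped ComplexOrder

noncomputable def matFun {m : ℕ} (f : ℝ → ℝ) (A : Matrix (Fin m) (Fin m) ℂ) :
    Matrix (Fin m) (Fin m) ℂ :=
  if hA : A.IsHermitian then
    (hA.eigenvectorUnitary : Matrix (Fin m) (Fin m) ℂ) *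
      Matrix.diagonal (fun i => (f (hA.eigenvalues i) : ℂ)) *
      (star (hA.eigenvectorUnitary : Matrix (Fin m) (Fin m) ℂ))
  else 0

/-- The unique positive definite square root of a positive definite matrix
(realized via the spectral decomposition). -/
noncomputable def msqrt {m : ℕ} (A : Matrix (Fin m) (Fin m) ℂ) : Matrix (Fin m) (Fin m) ℂ :=
  matFun Real.sqrt A

/-- The logarithm of a positive definite matrix: the unique Hermitian `L` with `exp L = A`. -/
noncomputable def mlog {m : ℕ} (A : Matrix (Fin m) (Fin m) ℂ) : Matrix (Fin m) (Fin m) ℂ :=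
  matFun Real.log A

/-- The real power `A ^ t` of a positive definite matrix, via the spectral decomposition. -/
noncomputable def mpow {m : ℕ} (A : Matrix (Fin m) (Fin m) ℂ) (t : ℝ) : Matrix (Fin m) (Fin m) ℂ :=
  matFun (fun x => x ^ t) A

/-- The matrix geometric mean `A # B`. -/
noncomputable def gmean {m : ℕ} (A B : Matrix (Fin m) (Fin m) ℂ) : Matrix (Fin m) (Fin m) ℂ :=
  msqrt A * msqrt ((msqrt A)⁻¹ * B * (msqrt A)⁻¹) * msqrt A

/-- The weighted geometric mean `A #_t B`. -/
noncomputable def wgmean {m : ℕ} (A B : Matrix (Fin m) (Fin m) ℂ) (t : ℝ) :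
    Matrix (Fin m) (Fin m) ℂ :=
  msqrt A * mpow ((msqrt A)⁻¹ * B * (msqrt A)⁻¹) t * msqrt A

/-- The Frobenius (Hilbert–Schmidt) norm `‖X‖₂ = (Tr(X*X))^{1/2}`. -/
noncomputable def fnorm {m : ℕ} (X : Matrix (Fin m) (Fin m) ℂ) : ℝ :=
  Real.sqrt ((Xᴴ * X).trace.re)

/-- The Riemannian metric `δ(A,B) = ‖log(A^{-1/2} B A^{-1/2})‖₂`. -/
noncomputable def rdist {m : ℕ} (A B : Matrix (Fin m) (Fin m) ℂ) : ℝ :=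
  fnorm (mlog ((msqrt A)⁻¹ * B * (msqrt A)⁻¹))

/-- The Loewner order: `A ≤ B` iff `B - A` is positive semidefinite. -/
def Loewner {m : ℕ} (A B : Matrix (Fin m) (Fin m) ℂ) : Prop :=
  (B - A).PosSemidef

/-! ### Functional calculus of Hermitian matrices -/

theorem matFun_eq_cfc {m : ℕ} (f : ℝ → ℝ) (A : Matrix (Fin m) (Fin m) ℂ) :
    matFun f A = cfc f A := by
  unfold matFun
  split_ifs with hA
  · rw [hA.cfc_eq]
    rfl
  · exact (cfc_apply_of_not_predicate A hA).symm

theorem matFun_continuousOn {m : ℕ} (f : ℝ → ℝ) (A : Matrix (Fin m) (Fin m) ℂ) :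
    ContinuousOn f (spectrum ℝ A) :=
  A.finite_real_spectrum.continuousOn f

theorem matFun_mul {m : ℕ} (f g : ℝ → ℝ) (A : Matrix (Fin m) (Fin m) ℂ) :
    matFun f A * matFun g A = matFun (fun x => f x * g x) A := by
  simp only [matFun_eq_cfc]
  exact (cfc_mul f g A (matFun_continuousOn f A) (matFun_continuousOn g A)).symm

theorem matFun_matFun {m : ℕ} (f g : ℝ → ℝ) {A : Matrix (Fin m) (Fin m) ℂ}
    (hA : A.IsHermitian) : matFun g (matFun f A) = matFun (fun x => g (f x)) A := by
  simp only [matFun_eq_cfc]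
  exact (cfc_comp g f A hA ((A.finite_real_spectrum.image f).continuousOn g)
    (matFun_continuousOn f A)).symm

theorem matFun_congr {m : ℕ} {f g : ℝ → ℝ} {A : Matrix (Fin m) (Fin m) ℂ}
    (hA : A.IsHermitian) (h : ∀ i, f (hA.eigenvalues i) = g (hA.eigenvalues i)) :
    matFun f A = matFun g A := by
  simp only [matFun, hA, dif_pos, h]

theorem matFun_id {m : ℕ} {A : Matrix (Fin m) (Fin m) ℂ} (hA : A.IsHermitian) :
    matFun (fun x => x) A = A := by
  rw [matFun_eq_cfc]
  exact cfc_id' ℝ A hA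

theorem matFun_one {m : ℕ} {A : Matrix (Fin m) (Fin m) ℂ} (hA : A.IsHermitian) :
    matFun (fun _ => 1) A = 1 := by
  rw [matFun_eq_cfc]
  exact cfc_const_one ℝ A hA

theorem matFun_isHermitian {m : ℕ} (f : ℝ → ℝ) (A : Matrix (Fin m) (Fin m) ℂ) :
    (matFun f A).IsHermitian := by
  rw [matFun_eq_cfc]
  exact cfc_predicate f A

theorem trace_matFun {m : ℕ} (f : ℝ → ℝ) {A : Matrix (Fin m) (Fin m) ℂ} (hA : A.IsHermitian) :
    (matFun f A).trace.re = ∑ i, f (hA.eigenvalues i) := by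
  simp only [matFun, hA, dif_pos]
  rw [Matrix.trace_mul_cycle, Unitary.coe_star_mul_self, one_mul, Matrix.trace_diagonal]
  simp

theorem matFun_posDef {m : ℕ} {f : ℝ → ℝ} {A : Matrix (Fin m) (Fin m) ℂ} (hA : A.IsHermitian)
    (hf : ∀ i, 0 < f (hA.eigenvalues i)) : (matFun f A).PosDef := by
  simp only [matFun, hA, dif_pos]
  have hU : IsUnit (hA.eigenvectorUnitary : Matrix (Fin m) (Fin m) ℂ) :=
    IsUnit.of_mul_eq_one _ (Unitary.coe_mul_star_self hA.eigenvectorUnitary)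
  have := (Matrix.PosDef.diagonal (d := fun i => (f (hA.eigenvalues i) : ℂ))
    (fun i => by exact_mod_cast hf i)).mul_mul_conjTranspose_same
    (Matrix.vecMul_injective_of_isUnit hU)
  exact this

theorem matFun_mul_trace {m : ℕ} (f g : ℝ → ℝ) {P Q : Matrix (Fin m) (Fin m) ℂ}
    (hP : P.IsHermitian) (hQ : Q.IsHermitian) :
    (matFun f P * matFun g Q).trace.re = ∑ i, ∑ j, f (hP.eigenvalues i) * g (hQ.eigenvalues j) *
      Complex.normSq ((star (hP.eigenvectorUnitary : Matrix (Fin m) (Fin m) ℂ) *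
        (hQ.eigenvectorUnitary : Matrix (Fin m) (Fin m) ℂ)) i j) := by
  simp only [matFun, hP, hQ, dif_pos]
  set U := (hP.eigenvectorUnitary : Matrix (Fin m) (Fin m) ℂ)
  set V := (hQ.eigenvectorUnitary : Matrix (Fin m) (Fin m) ℂ)
  set W := star U * V with hW
  have hWs : star V * U = star W := by simp [hW]
  set F := diagonal (fun i => (f (hP.eigenvalues i) : ℂ))
  set G := diagonal (fun i => (g (hQ.eigenvalues i) : ℂ))
  have h1 : (U * F * star U * (V * G * star V)).trace = (F * W * (G * star W)).trace := by
    rw [← hWs, hW, mul_assoc U F, mul_assoc U, Matrix.trace_mul_comm]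
    simp only [mul_assoc]
  rw [h1]
  simp only [Matrix.trace, Matrix.diag, Matrix.mul_apply (M := F * W), F, G,
    Matrix.diagonal_mul, Complex.re_sum]
  refine Finset.sum_congr rfl fun i _ => Finset.sum_congr rfl fun j _ => ?_
  rw [Matrix.star_apply]
  have : (f (hP.eigenvalues i) : ℂ) * W i j * ((g (hQ.eigenvalues j) : ℂ) * star (W i j)) =
      ((f (hP.eigenvalues i) * g (hQ.eigenvalues j) * Complex.normSq (W i j) : ℝ) : ℂ) := by
    push_cast
    rw [Complex.normSq_eq_conj_mul_self]
    simp only [Complex.star_def]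
    ring
  rw [this, Complex.ofReal_re]

/-! ### The Hilbert–Schmidt inner product -/

/-- The real Hilbert–Schmidt inner product `Re Tr(X* Y)`. -/
noncomputable def hsInner {m : ℕ} (X Y : Matrix (Fin m) (Fin m) ℂ) : ℝ := (Xᴴ * Y).trace.re

theorem hsInner_eq_sum {m : ℕ} (X Y : Matrix (Fin m) (Fin m) ℂ) :
    hsInner X Y = ∑ j, ∑ i, (star (X i j) * Y i j).re := by
  simp [hsInner, Matrix.trace, Matrix.mul_apply]

theorem hsInner_self_eq_sum {m : ℕ} (X : Matrix (Fin m) (Fin m) ℂ) :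
    hsInner X X = ∑ j, ∑ i, ‖X i j‖ ^ 2 := by
  rw [hsInner_eq_sum]
  refine Finset.sum_congr rfl fun i _ => Finset.sum_congr rfl fun j _ => ?_
  rw [← Complex.normSq_eq_norm_sq, Complex.normSq_apply]
  simp

theorem hsInner_self_nonneg {m : ℕ} (X : Matrix (Fin m) (Fin m) ℂ) : 0 ≤ hsInner X X := by
  rw [hsInner_self_eq_sum]
  positivity

theorem fnorm_sq {m : ℕ} (X : Matrix (Fin m) (Fin m) ℂ) : fnorm X ^ 2 = hsInner X X :=
  Real.sq_sqrt (hsInner_self_nonneg X)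

theorem hsInner_comm {m : ℕ} (X Y : Matrix (Fin m) (Fin m) ℂ) : hsInner X Y = hsInner Y X := by
  simp only [hsInner_eq_sum]
  refine Finset.sum_congr rfl fun i _ => Finset.sum_congr rfl fun j _ => ?_
  simp
  ring

theorem hsInner_add_right {m : ℕ} (X Y Z : Matrix (Fin m) (Fin m) ℂ) :
    hsInner X (Y + Z) = hsInner X Y + hsInner X Z := by
  simp [hsInner, mul_add]

theorem hsInner_smul_right {m : ℕ} (X Y : Matrix (Fin m) (Fin m) ℂ) (c : ℝ) :
    hsInner X (c • Y) = c * hsInner X Y := by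
  simp [hsInner]

theorem hsInner_sum_right {m n : ℕ} (X : Matrix (Fin m) (Fin m) ℂ)
    (Y : Fin n → Matrix (Fin m) (Fin m) ℂ) :
    hsInner X (∑ i, Y i) = ∑ i, hsInner X (Y i) := by
  simp [hsInner, Matrix.mul_sum, Matrix.trace_sum]

theorem hsInner_add_smul {m : ℕ} (X Y : Matrix (Fin m) (Fin m) ℂ) (c : ℝ) :
    hsInner (X + c • Y) (X + c • Y) =
      hsInner X X + 2 * c * hsInner X Y + c ^ 2 * hsInner Y Y := by
  rw [hsInner_add_right, hsInner_smul_right, hsInner_comm (X + c • Y) X,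
    hsInner_comm (X + c • Y) Y, hsInner_add_right, hsInner_smul_right, hsInner_add_right,
    hsInner_smul_right, hsInner_comm Y X]
  ring

theorem hsInner_sum_self_le {m : ℕ} (N : ℕ) (D : ℕ → Matrix (Fin m) (Fin m) ℂ) :
    hsInner (∑ k ∈ Finset.range N, D k) (∑ k ∈ Finset.range N, D k) ≤
      N * ∑ k ∈ Finset.range N, hsInner (D k) (D k) := by
  simp only [hsInner_self_eq_sum]
  rw [Finset.sum_comm (s := Finset.range N), Finset.mul_sum]
  refine Finset.sum_le_sum fun j _ => ?_
  rw [Finset.sum_comm (s := Finset.range N), Finset.mul_sum]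
  refine Finset.sum_le_sum fun i _ => ?_
  rw [Matrix.sum_apply]
  calc ‖∑ k ∈ Finset.range N, D k i j‖ ^ 2 ≤ (∑ k ∈ Finset.range N, ‖D k i j‖) ^ 2 := by
        gcongr
        exact norm_sum_le _ _
    _ ≤ _ := by
        simpa using sq_sum_le_card_mul_sum_sq (s := Finset.range N) (f := fun k => ‖D k i j‖)

/-! ### One-parameter exponential groups -/

/-- `exp (t S)` for a Hermitian matrix `S` and a real number `t`. -/
noncomputable def mexp {m : ℕ} (S : Matrix (Fin m) (Fin m) ℂ) (t : ℝ) :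
    Matrix (Fin m) (Fin m) ℂ :=
  matFun (fun x => Real.exp (t * x)) S

theorem mexp_zero {m : ℕ} {S : Matrix (Fin m) (Fin m) ℂ} (hS : S.IsHermitian) :
    mexp S 0 = 1 := by
  simpa [mexp] using matFun_one hS

theorem mexp_mul {m : ℕ} (S : Matrix (Fin m) (Fin m) ℂ) (s t : ℝ) :
    mexp S s * mexp S t = mexp S (s + t) := by
  simp only [mexp, matFun_mul, ← Real.exp_add, add_mul]

theorem mexp_inv {m : ℕ} {S : Matrix (Fin m) (Fin m) ℂ} (hS : S.IsHermitian) (t : ℝ) :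
    (mexp S t)⁻¹ = mexp S (-t) :=
  Matrix.inv_eq_right_inv (by rw [mexp_mul, add_neg_cancel, mexp_zero hS])

theorem mexp_posDef {m : ℕ} {S : Matrix (Fin m) (Fin m) ℂ} (hS : S.IsHermitian) (t : ℝ) :
    (mexp S t).PosDef :=
  matFun_posDef hS fun _ => Real.exp_pos _

theorem mlog_isHermitian {m : ℕ} (A : Matrix (Fin m) (Fin m) ℂ) : (mlog A).IsHermitian :=
  matFun_isHermitian _ A

theorem mlog_mexp {m : ℕ} {S : Matrix (Fin m) (Fin m) ℂ} (hS : S.IsHermitian) (t : ℝ) :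
    mlog (mexp S t) = t • S := by
  rw [mlog, mexp, matFun_matFun _ _ hS]
  simp only [Real.log_exp]
  rw [matFun_eq_cfc]
  exact cfc_const_mul_id t S hS

theorem mexp_mlog {m : ℕ} {A : Matrix (Fin m) (Fin m) ℂ} (hA : A.PosDef) :
    mexp (mlog A) 1 = A := by
  rw [mlog, mexp, matFun_matFun _ _ hA.1]
  conv_rhs => rw [← matFun_id hA.1]
  exact matFun_congr hA.1 fun i => by rw [one_mul, Real.exp_log (hA.eigenvalues_pos i)]

theorem mlog_one {m : ℕ} : mlog (1 : Matrix (Fin m) (Fin m) ℂ) = 0 := by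
  have h : (0 : Matrix (Fin m) (Fin m) ℂ).IsHermitian := Matrix.isHermitian_zero
  rw [← mexp_zero h, mlog_mexp h, zero_smul]

theorem mexp_continuous {m : ℕ} (S : Matrix (Fin m) (Fin m) ℂ) : Continuous (mexp S) := by
  unfold mexp matFun
  split_ifs with hS
  · fun_prop
  · fun_prop

theorem hsInner_self_eq_sum_eigenvalues {m : ℕ} {S : Matrix (Fin m) (Fin m) ℂ}
    (hS : S.IsHermitian) : hsInner S S = ∑ i, hS.eigenvalues i ^ 2 := by
  have h : S * S = matFun (fun x => x * x) S := by
    rw [← matFun_mul, matFun_id hS]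
  rw [hsInner, hS.eq, h, trace_matFun _ hS]
  simp only [sq]

theorem msqrt_posDef {m : ℕ} {A : Matrix (Fin m) (Fin m) ℂ} (hA : A.PosDef) :
    (msqrt A).PosDef :=
  matFun_posDef hA.1 fun i => Real.sqrt_pos.2 (hA.eigenvalues_pos i)

theorem msqrt_mul_self {m : ℕ} {A : Matrix (Fin m) (Fin m) ℂ} (hA : A.PosDef) :
    msqrt A * msqrt A = A := by
  rw [msqrt, matFun_mul]
  conv_rhs => rw [← matFun_id hA.1]
  exact matFun_congr hA.1 fun i => Real.mul_self_sqrt (hA.eigenvalues_pos i).le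

theorem inv_eq_matFun {m : ℕ} {A : Matrix (Fin m) (Fin m) ℂ} (hA : A.PosDef) :
    A⁻¹ = matFun (fun x => x⁻¹) A := by
  refine Matrix.inv_eq_right_inv ?_
  conv_lhs => enter [1]; rw [← matFun_id hA.1]
  rw [matFun_mul, ← matFun_one hA.1]
  exact matFun_congr hA.1 fun i => mul_inv_cancel₀ (ne_of_gt (hA.eigenvalues_pos i))

/-! ### The exponential metric increasing property -/

/-- The symmetric divergence `Re Tr(P⁻¹ Q + Q⁻¹ P) - 2 m`. It is invariant under congruence, and
in terms of the eigenvalues `exp κᵢ` of `P⁻¹ Q` it equals `∑ᵢ 4 sinh² (κᵢ / 2)`, so it agrees to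
second order with the squared Riemannian distance. -/
noncomputable def symDiv {m : ℕ} (P Q : Matrix (Fin m) (Fin m) ℂ) : ℝ :=
  (P⁻¹ * Q).trace.re + (Q⁻¹ * P).trace.re - 2 * m

theorem log_sub_log_sq_le {p q : ℝ} (hp : 0 < p) (hq : 0 < q) :
    (Real.log q - Real.log p) ^ 2 ≤ p⁻¹ * q + q⁻¹ * p - 2 := by
  set x := (Real.log q - Real.log p) / 2 with hx
  have h1 : p⁻¹ * q = Real.exp x * Real.exp x := by
    rw [← Real.exp_add, show x + x = Real.log q - Real.log p by rw [hx]; ring, Real.exp_sub,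
      Real.exp_log hp, Real.exp_log hq]
    ring
  have h2 : q⁻¹ * p = Real.exp (-x) * Real.exp (-x) := by
    rw [← Real.exp_add, show -x + -x = Real.log p - Real.log q by rw [hx]; ring, Real.exp_sub,
      Real.exp_log hp, Real.exp_log hq]
    ring
  have h3 : Real.exp x * Real.exp (-x) = 1 := by rw [← Real.exp_add]; simp
  have h4 : p⁻¹ * q + q⁻¹ * p - 2 = 4 * Real.sinh x ^ 2 := by
    rw [h1, h2, Real.sinh_eq]
    linear_combination 2 * h3
  have h5 : x ^ 2 ≤ Real.sinh x ^ 2 := by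
    rw [sq_le_sq, Real.abs_sinh]
    exact Real.self_le_sinh_iff.2 (abs_nonneg x)
  rw [h4, show Real.log q - Real.log p = 2 * x by rw [hx]; ring]
  linarith

/-- If `P` and `Q` have eigenvalues `pᵢ`, `qⱼ` and `W` is the unitary matrix of inner products of
their eigenvectors, then both sides are sums over `(i, j)` with weights `|Wᵢⱼ|²`, and the inequality
holds term by term. -/
theorem hsInner_mlog_sub_le_symDiv {m : ℕ} {P Q : Matrix (Fin m) (Fin m) ℂ} (hP : P.PosDef)
    (hQ : Q.PosDef) : hsInner (mlog Q - mlog P) (mlog Q - mlog P) ≤ symDiv P Q := by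
  have key := fun f g : ℝ → ℝ => matFun_mul_trace f g hP.1 hQ.1
  set W := fun i j => Complex.normSq
    ((star (hP.1.eigenvectorUnitary : Matrix (Fin m) (Fin m) ℂ) *
        (hQ.1.eigenvectorUnitary : Matrix (Fin m) (Fin m) ℂ)) i j)
  set p := hP.1.eigenvalues
  set q := hQ.1.eigenvalues
  have hm : (m : ℝ) = ∑ i, ∑ j, 1 * 1 * W i j := by
    rw [← key (fun _ => 1) (fun _ => 1), matFun_one hP.1, matFun_one hQ.1]
    simp
  have h1 : (P⁻¹ * Q).trace.re = ∑ i, ∑ j, (p i)⁻¹ * q j * W i j := by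
    rw [← key (fun x => x⁻¹) (fun x => x), ← inv_eq_matFun hP, matFun_id hQ.1]
  have h2 : (Q⁻¹ * P).trace.re = ∑ i, ∑ j, p i * (q j)⁻¹ * W i j := by
    rw [← key (fun x => x) (fun x => x⁻¹), ← inv_eq_matFun hQ, matFun_id hP.1,
      Matrix.trace_mul_comm]
  have h3 : (mlog P * mlog Q).trace.re = ∑ i, ∑ j, Real.log (p i) * Real.log (q j) * W i j :=
    key _ _
  have h4 : (mlog Q * mlog Q).trace.re = ∑ i, ∑ j, 1 * (Real.log (q j) * Real.log (q j)) * W i j := by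
    rw [← key (fun _ => 1) (fun x => Real.log x * Real.log x), ← matFun_mul, matFun_one hP.1,
      one_mul]
    rfl
  have h5 : (mlog P * mlog P).trace.re = ∑ i, ∑ j, (Real.log (p i) * Real.log (p i)) * 1 * W i j := by
    rw [← key (fun x => Real.log x * Real.log x) (fun _ => 1), ← matFun_mul, matFun_one hQ.1,
      mul_one]
    rfl
  have h6 : hsInner (mlog Q - mlog P) (mlog Q - mlog P) = (mlog Q * mlog Q).trace.re +
      (mlog P * mlog P).trace.re - 2 * (mlog P * mlog Q).trace.re := by
    rw [hsInner, ((mlog_isHermitian Q).sub (mlog_isHermitian P)).eq, sub_mul, mul_sub, mul_sub]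
    simp only [Matrix.trace_sub, Complex.sub_re]
    rw [Matrix.trace_mul_comm (mlog Q) (mlog P)]
    ring
  rw [h6, symDiv, h1, h2, h3, h4, h5, hm]
  simp only [Finset.mul_sum, ← Finset.sum_add_distrib, ← Finset.sum_sub_distrib]
  refine Finset.sum_le_sum fun i _ => Finset.sum_le_sum fun j _ => ?_
  have h7 := mul_le_mul_of_nonneg_right
    (log_sub_log_sq_le (hP.eigenvalues_pos i) (hQ.eigenvalues_pos j))
    (Complex.normSq_nonneg ((star (hP.1.eigenvectorUnitary : Matrix (Fin m) (Fin m) ℂ) *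
        (hQ.1.eigenvectorUnitary : Matrix (Fin m) (Fin m) ℂ)) i j))
  change _ * W i j ≤ _ * W i j at h7
  change (Real.log (q j) - Real.log (p i)) ^ 2 * W i j ≤
    ((p i)⁻¹ * q j + (q j)⁻¹ * p i - 2) * W i j at h7
  linarith

theorem trace_congr_inv_mul {m : ℕ} {D : Matrix (Fin m) (Fin m) ℂ} (hD : IsUnit D)
    (M N : Matrix (Fin m) (Fin m) ℂ) :
    ((D * M * Dᴴ)⁻¹ * (D * N * Dᴴ)).trace = (M⁻¹ * N).trace := by
  have h1 : D⁻¹ * D = 1 := Matrix.nonsing_inv_mul D ((Matrix.isUnit_iff_isUnit_det D).1 hD)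
  have h2 : Dᴴ * (Dᴴ)⁻¹ = 1 := by
    rw [← Matrix.conjTranspose_nonsing_inv, ← Matrix.conjTranspose_mul, h1,
      Matrix.conjTranspose_one]
  calc ((D * M * Dᴴ)⁻¹ * (D * N * Dᴴ)).trace
      = ((Dᴴ)⁻¹ * (M⁻¹ * (D⁻¹ * D) * N * Dᴴ)).trace := by
        rw [Matrix.mul_inv_rev, Matrix.mul_inv_rev]
        simp only [mul_assoc]
    _ = (M⁻¹ * N).trace := by
        rw [h1, Matrix.trace_mul_comm, mul_one, mul_assoc, h2, mul_one]

theorem symDiv_congr {m : ℕ} {D : Matrix (Fin m) (Fin m) ℂ} (hD : IsUnit D)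
    (M N : Matrix (Fin m) (Fin m) ℂ) : symDiv (D * M * Dᴴ) (D * N * Dᴴ) = symDiv M N := by
  simp only [symDiv, trace_congr_inv_mul hD]

theorem symDiv_mexp {m : ℕ} {K : Matrix (Fin m) (Fin m) ℂ} (hK : K.IsHermitian) (s t : ℝ) :
    symDiv (mexp K s) (mexp K t) = ∑ i, 4 * Real.sinh ((t - s) / 2 * hK.eigenvalues i) ^ 2 := by
  rw [symDiv, mexp_inv hK, mexp_inv hK, mexp_mul, mexp_mul, mexp, mexp, trace_matFun _ hK,
    trace_matFun _ hK]
  have hm : (2 * m : ℝ) = ∑ _i : Fin m, 2 := by simp [mul_comm]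
  rw [hm, ← Finset.sum_add_distrib, ← Finset.sum_sub_distrib]
  refine Finset.sum_congr rfl fun i _ => ?_
  set x := (t - s) / 2 * hK.eigenvalues i with hx
  rw [show (-s + t) * hK.eigenvalues i = x + x by rw [hx]; ring,
    show (-t + s) * hK.eigenvalues i = -x + -x by rw [hx]; ring, Real.exp_add, Real.exp_add,
    Real.sinh_eq]
  have h3 : Real.exp x * Real.exp (-x) = 1 := by rw [← Real.exp_add]; simp
  linear_combination 2 * h3

theorem posDef_congr {m : ℕ} {D : Matrix (Fin m) (Fin m) ℂ} (hD : IsUnit D)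
    {M : Matrix (Fin m) (Fin m) ℂ} (hM : M.PosDef) : (D * M * Dᴴ).PosDef :=
  hM.mul_mul_conjTranspose_same (Matrix.vecMul_injective_of_isUnit hD)

theorem tendsto_mul_sinh_div (u : ℝ) :
    Filter.Tendsto (fun N : ℕ => (N : ℝ) ^ 2 * (4 * Real.sinh (1 / (N : ℝ) / 2 * u) ^ 2))
      Filter.atTop (nhds (u ^ 2)) := by
  have h1 : HasDerivAt (fun h : ℝ => Real.sinh (h / 2 * u)) (u / 2) 0 := by
    have := (((hasDerivAt_id (0 : ℝ)).div_const 2).mul_const u).sinh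
    simpa [mul_comm, div_eq_mul_inv] using this
  have h2 := h1.tendsto_slope_zero_right
  have h3 : Filter.Tendsto (fun N : ℕ => 1 / (N : ℝ)) Filter.atTop (nhdsWithin 0 (Set.Ioi 0)) := by
    simpa [Function.comp_def] using
      tendsto_inv_atTop_nhdsGT_zero.comp (tendsto_natCast_atTop_atTop (R := ℝ))
  have h4 := ((h2.comp h3).pow 2).const_mul 4
  rw [show 4 * (u / 2) ^ 2 = u ^ 2 by ring] at h4
  refine h4.congr fun N => ?_
  simp
  ring

/-- The discretised length estimate: along the geodesic `s ↦ D (exp s K) D*`, cut into `N` equal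
pieces, each increment of the logarithm is controlled by `symDiv`; letting `N → ∞` turns
`N² ∑ᵢ 4 sinh² (κᵢ / 2 N)` into `∑ᵢ κᵢ²`. -/
theorem hsInner_mlog_geodesic_le {m : ℕ} {D K : Matrix (Fin m) (Fin m) ℂ} (hD : IsUnit D)
    (hK : K.IsHermitian) :
    hsInner (mlog (D * mexp K 1 * Dᴴ) - mlog (D * mexp K 0 * Dᴴ))
      (mlog (D * mexp K 1 * Dᴴ) - mlog (D * mexp K 0 * Dᴴ)) ≤ hsInner K K := by
  have hlim : Filter.Tendsto (fun N : ℕ => ∑ i, (N : ℝ) ^ 2 *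
      (4 * Real.sinh (1 / (N : ℝ) / 2 * hK.eigenvalues i) ^ 2)) Filter.atTop
      (nhds (hsInner K K)) := by
    rw [hsInner_self_eq_sum_eigenvalues hK]
    exact tendsto_finsetSum _ fun i _ => tendsto_mul_sinh_div _
  refine ge_of_tendsto hlim ?_
  filter_upwards [Filter.eventually_gt_atTop 0] with N hN
  have hN' : (N : ℝ) ≠ 0 := by positivity
  set L := fun k : ℕ => mlog (D * mexp K (k / N) * Dᴴ) with hL
  have h1 : mlog (D * mexp K 1 * Dᴴ) - mlog (D * mexp K 0 * Dᴴ) =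
      ∑ k ∈ Finset.range N, (L (k + 1) - L k) := by
    rw [Finset.sum_range_sub]
    simp [hL, hN']
  rw [h1]
  refine (hsInner_sum_self_le N _).trans ?_
  have h2 : ∀ k ∈ Finset.range N, hsInner (L (k + 1) - L k) (L (k + 1) - L k) ≤
      ∑ i, 4 * Real.sinh (1 / (N : ℝ) / 2 * hK.eigenvalues i) ^ 2 := by
    intro k _
    refine (hsInner_mlog_sub_le_symDiv (posDef_congr hD (mexp_posDef hK _))
      (posDef_congr hD (mexp_posDef hK _))).trans_eq ?_
    rw [symDiv_congr hD, symDiv_mexp hK]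
    have : ((k + 1 : ℕ) : ℝ) / N - k / N = 1 / N := by
      push_cast
      ring
    rw [this]
  refine (mul_le_mul_of_nonneg_left (Finset.sum_le_sum h2) (Nat.cast_nonneg N)).trans_eq ?_
  rw [Finset.sum_const, Finset.card_range, nsmul_eq_mul, ← mul_assoc, ← sq, Finset.mul_sum]

theorem posDef_mul_inv {m : ℕ} {M : Matrix (Fin m) (Fin m) ℂ} (hM : M.PosDef) : M * M⁻¹ = 1 :=
  Matrix.mul_nonsing_inv M ((Matrix.isUnit_iff_isUnit_det M).1 hM.isUnit)

theorem posDef_inv_mul {m : ℕ} {M : Matrix (Fin m) (Fin m) ℂ} (hM : M.PosDef) : M⁻¹ * M = 1 :=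
  Matrix.nonsing_inv_mul M ((Matrix.isUnit_iff_isUnit_det M).1 hM.isUnit)

theorem posDef_inv_sqrt_congr {m : ℕ} {P Q : Matrix (Fin m) (Fin m) ℂ} (hP : P.PosDef)
    (hQ : Q.PosDef) : ((msqrt P)⁻¹ * Q * (msqrt P)⁻¹).PosDef := by
  have h := (msqrt_posDef hP).inv
  have := posDef_congr h.isUnit hQ
  rwa [h.1.eq] at this

/-- The exponential metric increasing property, with an arbitrary base point encoded by the
congruence `C`. -/
theorem hsInner_mlog_congr_le_rdist {m : ℕ} {C P Q : Matrix (Fin m) (Fin m) ℂ} (hC : IsUnit C)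
    (hP : P.PosDef) (hQ : Q.PosDef) :
    hsInner (mlog (C * Q * Cᴴ) - mlog (C * P * Cᴴ)) (mlog (C * Q * Cᴴ) - mlog (C * P * Cᴴ)) ≤
      rdist P Q ^ 2 := by
  have hR := msqrt_posDef hP
  have h := hsInner_mlog_geodesic_le (hC.mul hR.isUnit)
    (mlog_isHermitian ((msqrt P)⁻¹ * Q * (msqrt P)⁻¹))
  rw [mexp_zero (mlog_isHermitian _), mexp_mlog (posDef_inv_sqrt_congr hP hQ)] at h
  have h1 : C * msqrt P * ((msqrt P)⁻¹ * Q * (msqrt P)⁻¹) * (C * msqrt P)ᴴ = C * Q * Cᴴ := by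
    rw [Matrix.conjTranspose_mul, hR.1.eq]
    calc _ = C * (msqrt P * (msqrt P)⁻¹) * Q * ((msqrt P)⁻¹ * msqrt P) * Cᴴ := by
          simp only [mul_assoc]
      _ = _ := by rw [posDef_mul_inv hR, posDef_inv_mul hR, mul_one, mul_one]
  have h2 : C * msqrt P * 1 * (C * msqrt P)ᴴ = C * P * Cᴴ := by
    rw [Matrix.conjTranspose_mul, hR.1.eq, mul_one]
    conv_rhs => rw [← msqrt_mul_self hP]
    simp only [mul_assoc]
  rw [h1, h2] at h
  rwa [rdist, fnorm_sq]

/-! ### Gradient of the squared distance -/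

theorem msqrt_one {m : ℕ} : msqrt (1 : Matrix (Fin m) (Fin m) ℂ) = 1 := by
  have h : (1 : Matrix (Fin m) (Fin m) ℂ).IsHermitian := Matrix.isHermitian_one
  conv_lhs => rw [← matFun_one h]
  rw [msqrt, matFun_matFun _ _ h]
  simpa using matFun_one h

theorem inv_sqrt_congr_self {m : ℕ} {P : Matrix (Fin m) (Fin m) ℂ} (hP : P.PosDef) :
    (msqrt P)⁻¹ * P * (msqrt P)⁻¹ = 1 := by
  have hR := msqrt_posDef hP
  conv_lhs => enter [1, 2]; rw [← msqrt_mul_self hP]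
  rw [← mul_assoc, posDef_inv_mul hR, one_mul, posDef_mul_inv hR]

/-- Any congruence carrying `P` to the identity computes the distance from `P`; the inequality
comes from applying the exponential metric increasing property to the pair `1`, `C Q C*`. -/
theorem rdist_sq_le_of_congr_eq_one {m : ℕ} {C P Q : Matrix (Fin m) (Fin m) ℂ} (hC : IsUnit C)
    (hP : P.PosDef) (hQ : Q.PosDef) (h1 : C * P * Cᴴ = 1) :
    rdist P Q ^ 2 ≤ hsInner (mlog (C * Q * Cᴴ)) (mlog (C * Q * Cᴴ)) := by
  have hR := (msqrt_posDef hP).inv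
  have hC1 : C⁻¹ * C = 1 := Matrix.nonsing_inv_mul C ((Matrix.isUnit_iff_isUnit_det C).1 hC)
  have hC2 : Cᴴ * (C⁻¹)ᴴ = 1 := by
    rw [← Matrix.conjTranspose_mul, hC1, Matrix.conjTranspose_one]
  have hCi : IsUnit C⁻¹ := Matrix.isUnit_nonsing_inv_iff.2 hC
  have h := hsInner_mlog_congr_le_rdist (hR.isUnit.mul hCi) Matrix.PosDef.one (posDef_congr hC hQ)
  have h2 : ∀ M : Matrix (Fin m) (Fin m) ℂ,
      (msqrt P)⁻¹ * C⁻¹ * (C * M * Cᴴ) * ((msqrt P)⁻¹ * C⁻¹)ᴴ =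
        (msqrt P)⁻¹ * M * (msqrt P)⁻¹ := by
    intro M
    rw [Matrix.conjTranspose_mul, hR.1.eq]
    calc _ = (msqrt P)⁻¹ * (C⁻¹ * C) * M * (Cᴴ * (C⁻¹)ᴴ) * (msqrt P)⁻¹ := by
          simp only [mul_assoc]
      _ = _ := by rw [hC1, hC2, mul_one, mul_one]
  have h3 := h2 P
  rw [h1, inv_sqrt_congr_self hP] at h3
  rw [h2, h3, mlog_one, sub_zero] at h
  rw [rdist, fnorm_sq]
  refine h.trans_eq ?_
  rw [rdist, fnorm_sq, msqrt_one, inv_one, one_mul, mul_one]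

theorem tendsto_symDiv_mexp_congr {m : ℕ} {B S : Matrix (Fin m) (Fin m) ℂ} (hB : B.PosDef)
    (hS : S.IsHermitian) :
    Filter.Tendsto (fun t : ℝ => symDiv B (mexp S (-(t / 2)) * B * mexp S (-(t / 2))))
      (nhds 0) (nhds 0) := by
  have h1 : ∀ t : ℝ, symDiv B (mexp S (-(t / 2)) * B * mexp S (-(t / 2))) =
      (B⁻¹ * (mexp S (-(t / 2)) * B * mexp S (-(t / 2)))).trace.re +
      (mexp S (t / 2) * (B⁻¹ * mexp S (t / 2)) * B).trace.re - 2 * m := by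
    intro t
    rw [symDiv, Matrix.mul_inv_rev, Matrix.mul_inv_rev, mexp_inv hS, neg_neg]
  have hc := mexp_continuous S
  have h2 : Continuous fun t : ℝ => symDiv B (mexp S (-(t / 2)) * B * mexp S (-(t / 2))) := by
    simp only [h1]
    fun_prop
  have h3 := h2.tendsto 0
  have h4 : symDiv B (mexp S (-((0 : ℝ) / 2)) * B * mexp S (-((0 : ℝ) / 2))) = 0 := by
    rw [zero_div, neg_zero, mexp_zero hS, one_mul, mul_one, symDiv, posDef_inv_mul hB]
    simp
    ring
  rwa [h4] at h3

/-- The Karcher equation: a positive definite `X` minimizes `Y ↦ Σᵢ wᵢ δ²(Y, Aᵢ)` over the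
positive definite matrices iff `Σᵢ wᵢ log(X^{-1/2} Aᵢ X^{-1/2}) = 0`. -/
theorem karcher_equation {m n : ℕ} (A : Fin n → Matrix (Fin m) (Fin m) ℂ)
    (hA : ∀ i, (A i).PosDef) (w : Fin n → ℝ) (hw : ∀ i, 0 < w i) (hw1 : ∑ i, w i = 1)
    (X : Matrix (Fin m) (Fin m) ℂ) (hX : X.PosDef) :
    (∀ Y : Matrix (Fin m) (Fin m) ℂ, Y.PosDef →
        ∑ i, w i * rdist X (A i) ^ 2 ≤ ∑ i, w i * rdist Y (A i) ^ 2) ↔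
      ∑ i, w i • mlog ((msqrt X)⁻¹ * A i * (msqrt X)⁻¹) = 0 := by
  have hR := msqrt_posDef hX
  have hRi := hR.inv
  set B := fun i => (msqrt X)⁻¹ * A i * (msqrt X)⁻¹ with hBdef
  have hB : ∀ i, (B i).PosDef := fun i => posDef_inv_sqrt_congr hX (hA i)
  have hXA : ∀ i, rdist X (A i) ^ 2 = hsInner (mlog (B i)) (mlog (B i)) := fun i => fnorm_sq _
  constructor
  · intro hmin
    set S := ∑ i, w i • mlog (B i) with hSdef
    have hS : S.IsHermitian := by
      rw [hSdef, Matrix.IsHermitian, Matrix.conjTranspose_sum]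
      refine Finset.sum_congr rfl fun i _ => ?_
      rw [Matrix.conjTranspose_smul, (mlog_isHermitian (B i)).eq, star_trivial]
    set Q := fun (t : ℝ) i => mexp S (-(t / 2)) * B i * mexp S (-(t / 2)) with hQdef
    have hbound : ∀ t : ℝ, 0 < t → hsInner S S ≤ ∑ i, w i * symDiv (B i) (Q t i) := by
      intro t ht
      have hE := mexp_posDef hS (-(t / 2))
      have hQ : ∀ i, (Q t i).PosDef := fun i => by
        have := posDef_congr hE.isUnit (hB i)
        rwa [hE.1.eq] at this
      -- `Y` is the point `exp_X (t S)` of the geodesic issuing from `X` in the direction `S`,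
      -- and `C` is a congruence carrying `Y` to the identity.
      set Y := msqrt X * mexp S t * msqrt X with hYdef
      have hY : Y.PosDef := by
        have := posDef_congr hR.isUnit (mexp_posDef hS t)
        rwa [hR.1.eq] at this
      set C := mexp S (-(t / 2)) * (msqrt X)⁻¹ with hCdef
      have hC : IsUnit C := hE.isUnit.mul hRi.isUnit
      have hCM : ∀ M, C * M * Cᴴ =
          mexp S (-(t / 2)) * ((msqrt X)⁻¹ * M * (msqrt X)⁻¹) * mexp S (-(t / 2)) := by
        intro M
        rw [hCdef, Matrix.conjTranspose_mul, hRi.1.eq, hE.1.eq]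
        simp only [mul_assoc]
      have hCA : ∀ i, C * A i * Cᴴ = Q t i := fun i => hCM (A i)
      have hCX : C * X * Cᴴ = mexp S (-t) := by
        rw [hCM, inv_sqrt_congr_self hX, mul_one, mexp_mul]
        congr 1
        ring
      have hCY : C * Y * Cᴴ = 1 := by
        have : (msqrt X)⁻¹ * Y * (msqrt X)⁻¹ = mexp S t := by
          calc _ = ((msqrt X)⁻¹ * msqrt X) * mexp S t * (msqrt X * (msqrt X)⁻¹) := by
                rw [hYdef]
                simp only [mul_assoc]
            _ = _ := by rw [posDef_inv_mul hR, posDef_mul_inv hR, one_mul, mul_one]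
        rw [hCM, this, mexp_mul, mexp_mul, ← mexp_zero hS]
        congr 1
        ring
      have h1 : ∀ i, rdist Y (A i) ^ 2 + 2 * t * hsInner S (mlog (Q t i)) + t ^ 2 * hsInner S S ≤
          rdist X (A i) ^ 2 := by
        intro i
        have h2 := hsInner_mlog_congr_le_rdist hC hX (hA i)
        have h3 := rdist_sq_le_of_congr_eq_one hC hY (hA i) hCY
        rw [hCA, hCX, mlog_mexp hS, neg_smul, sub_neg_eq_add, hsInner_add_smul,
          hsInner_comm _ S] at h2
        rw [hCA] at h3
        linarith
      -- Cauchy–Schwarz in the form `2 ⟨S, D⟩ ≥ - ⟨S, S⟩ - ⟨D, D⟩` with `D = log Q - log B`.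
      have h4 : ∀ i, 2 * hsInner S (mlog (B i)) - hsInner S S - symDiv (B i) (Q t i) ≤
          2 * hsInner S (mlog (Q t i)) := by
        intro i
        have h5 := hsInner_mlog_sub_le_symDiv (hB i) (hQ i)
        set D := mlog (Q t i) - mlog (B i) with hD
        have h6 := hsInner_self_nonneg (S + (1 : ℝ) • D)
        rw [hsInner_add_smul] at h6
        have h7 : mlog (Q t i) = mlog (B i) + D := by rw [hD]; abel
        rw [h7, hsInner_add_right]
        linarith
      have h8 : ∑ i, w i * hsInner S (mlog (B i)) = hsInner S S := by
        conv_rhs => enter [2]; rw [hSdef]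
        rw [hsInner_sum_right]
        simp only [hsInner_smul_right]
      have h9 : ∑ i, w i * (rdist Y (A i) ^ 2 + t * (2 * hsInner S (mlog (B i)) - hsInner S S -
          symDiv (B i) (Q t i))) ≤ ∑ i, w i * rdist X (A i) ^ 2 := by
        refine Finset.sum_le_sum fun i _ => mul_le_mul_of_nonneg_left ?_ (hw i).le
        have := mul_le_mul_of_nonneg_left (h4 i) ht.le
        have h10 := mul_nonneg (sq_nonneg t) (hsInner_self_nonneg S)
        linarith [h1 i]
      have h11 : ∑ i, w i * (rdist Y (A i) ^ 2 + t * (2 * hsInner S (mlog (B i)) - hsInner S S -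
          symDiv (B i) (Q t i))) = ∑ i, w i * rdist Y (A i) ^ 2 +
            t * (2 * ∑ i, w i * hsInner S (mlog (B i)) - (∑ i, w i) * hsInner S S -
              ∑ i, w i * symDiv (B i) (Q t i)) := by
        simp only [Finset.mul_sum, Finset.sum_mul, ← Finset.sum_add_distrib,
          ← Finset.sum_sub_distrib]
        exact Finset.sum_congr rfl fun i _ => by ring
      rw [h11, h8, hw1] at h9
      have h12 := hmin Y hY
      have h13 : t * (2 * hsInner S S - 1 * hsInner S S - ∑ i, w i * symDiv (B i) (Q t i)) ≤ 0 := by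
        linarith
      have h14 := nonpos_of_mul_nonpos_right h13 ht
      linarith
    have hlim : Filter.Tendsto (fun t : ℝ => ∑ i, w i * symDiv (B i) (Q t i))
        (nhdsWithin 0 (Set.Ioi 0)) (nhds 0) := by
      have : Filter.Tendsto (fun t : ℝ => ∑ i, w i * symDiv (B i) (Q t i))
          (nhds 0) (nhds (∑ i, w i * 0)) :=
        tendsto_finsetSum _ fun i _ => (tendsto_symDiv_mexp_congr (hB i) hS).const_mul _
      simp only [mul_zero, Finset.sum_const_zero] at this
      exact this.mono_left nhdsWithin_le_nhds
    have hS0 : hsInner S S ≤ 0 :=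
      ge_of_tendsto hlim (Filter.eventually_of_mem self_mem_nhdsWithin hbound)
    have hS1 := le_antisymm hS0 (hsInner_self_nonneg S)
    rw [hsInner_self_eq_sum, Finset.sum_eq_zero_iff_of_nonneg (fun _ _ => by positivity)] at hS1
    ext i j
    have hS2 := hS1 j (Finset.mem_univ j)
    rw [Finset.sum_eq_zero_iff_of_nonneg (fun _ _ => by positivity)] at hS2
    simpa using hS2 i (Finset.mem_univ i)
  · intro hS Y hY
    set H := mlog ((msqrt X)⁻¹ * Y * (msqrt X)⁻¹) with hH
    have h1 : ∀ i, hsInner (mlog (B i)) (mlog (B i)) - 2 * hsInner H (mlog (B i)) ≤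
        rdist Y (A i) ^ 2 := by
      intro i
      have h2 := hsInner_mlog_congr_le_rdist hRi.isUnit hY (hA i)
      rw [hRi.1.eq] at h2
      change hsInner (mlog (B i) - H) (mlog (B i) - H) ≤ _ at h2
      have h3 := hsInner_add_smul (mlog (B i)) H (-1)
      rw [neg_one_smul, ← sub_eq_add_neg, hsInner_comm _ H] at h3
      linarith [hsInner_self_nonneg H]
    have h4 : ∑ i, w i * hsInner H (mlog (B i)) = 0 := by
      have h5 : hsInner H (∑ i, w i • mlog (B i)) = 0 := by
        rw [hS]
        simp [hsInner]
      rw [hsInner_sum_right] at h5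
      simpa only [hsInner_smul_right] using h5
    calc ∑ i, w i * rdist X (A i) ^ 2
        = ∑ i, w i * hsInner (mlog (B i)) (mlog (B i)) -
            2 * ∑ i, w i * hsInner H (mlog (B i)) := by
          rw [h4]
          simp only [hXA, mul_zero, sub_zero]
      _ = ∑ i, w i * (hsInner (mlog (B i)) (mlog (B i)) - 2 * hsInner H (mlog (B i))) := by
          rw [Finset.mul_sum, ← Finset.sum_sub_distrib]
          exact Finset.sum_congr rfl fun i _ => by ring
      _ ≤ ∑ i, w i * rdist Y (A i) ^ 2 :=
          Finset.sum_le_sum fun i _ => mul_le_mul_of_nonneg_left (h1 i) (hw i).le
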